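/- For an arbitrary canonical state w ∈ W and any formula [C]^T_X φ ∈ F(w), there is an action profile s ∈ Δ^C such that for all canonical states w', v ∈ W and each complete action profile δ ∈ Δ^𝒜, if w ∼_X w', s =_C δ, T ⊆ 𝒯_{w'}, T ⊆ 𝒯_v, and (w', δ, v) ∈ M, then φ ∈ F(v). -/

import Mathlib

/- Language: formulas over atomic propositions P, data variables V, actors 𝒜 = A.
   `bel T X φ` is B^T_X φ ; `str C T X φ` is [C]^T_X φ. -/
inductive Formula (P V A : Type) : Type
  | atom : P → Formula P V A
  | neg : Formula P V A → Formula P V A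
  | imp : Formula P V A → Formula P V A → Formula P V A
  | bel : Set V → Set V → Formula P V A → Formula P V A
  | str : Set A → Set V → Set V → Formula P V A → Formula P V A

variable {P V A : Type}

/-- Propositional tautologies: true under every valuation respecting ¬ and →. -/
def Tautology (φ : Formula P V A) : Prop :=
  ∀ v : Formula P V A → Prop,
    (∀ ψ, v (Formula.neg ψ) ↔ ¬ v ψ) →
    (∀ ψ χ, v (Formula.imp ψ χ) ↔ (v ψ → v χ)) →
    v φ

/-- Theorems of the logical system of doxastic strategies. -/
inductive Thm : Formula P V A → Prop
  | taut {φ : Formula P V A} : Tautology φ → Thm φ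
  | truth {X : Set V} {φ : Formula P V A} :
      Thm (Formula.imp (Formula.bel ∅ X φ) φ)
  | negIntro {T X : Set V} {φ : Formula P V A} :
      Thm (Formula.imp (Formula.neg (Formula.bel T X φ))
        (Formula.bel ∅ X (Formula.neg (Formula.bel T X φ))))
  | distrib {T X : Set V} {φ ψ : Formula P V A} :
      Thm (Formula.imp (Formula.bel T X (Formula.imp φ ψ))
        (Formula.imp (Formula.bel T X φ) (Formula.bel T X ψ)))
  | trust {T X Y : Set V} {φ : Formula P V A} :
      Thm (Formula.bel T X (Formula.imp (Formula.bel T Y φ) φ))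
  | monoB {T T' X X' : Set V} {φ : Formula P V A} :
      T ⊆ T' → X ⊆ X' →
      Thm (Formula.imp (Formula.bel T X φ) (Formula.bel T' X' φ))
  | monoS {C C' : Set A} {T T' X X' : Set V} {φ : Formula P V A} :
      T ⊆ T' → X ⊆ X' → C ⊆ C' →
      Thm (Formula.imp (Formula.str C T X φ) (Formula.str C' T' X' φ))
  | coop {C D : Set A} {T X : Set V} {φ ψ : Formula P V A} :
      C ∩ D = ∅ →
      Thm (Formula.imp (Formula.str C T X (Formula.imp φ ψ))
        (Formula.imp (Formula.str D T X φ) (Formula.str (C ∪ D) T X ψ)))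
  | strIntro₁ {C : Set A} {T X : Set V} {φ : Formula P V A} :
      Thm (Formula.imp (Formula.str C T X φ) (Formula.bel T X (Formula.str C T X φ)))
  | strIntro₂ {C : Set A} {T X : Set V} {φ : Formula P V A} :
      Thm (Formula.imp (Formula.bel T X (Formula.str C T X φ)) (Formula.str C T X φ))
  | unavoid {T X Y : Set V} {φ : Formula P V A} :
      Thm (Formula.imp (Formula.bel T X (Formula.str ∅ T Y φ)) (Formula.str ∅ T X φ))
  | pub {T : Set V} {φ : Formula P V A} :
      Thm (Formula.imp (Formula.bel T ∅ φ) (Formula.str ∅ T ∅ φ))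
  | mp {φ ψ : Formula P V A} : Thm (Formula.imp φ ψ) → Thm φ → Thm ψ
  | nec {φ : Formula P V A} : Thm φ → Thm (Formula.bel ∅ ∅ φ)

/-- `Deduces F φ`: φ is derivable from F together with the theorems using only Modus Ponens. -/
inductive Deduces (F : Set (Formula P V A)) : Formula P V A → Prop
  | thm {φ : Formula P V A} : Thm φ → Deduces F φ
  | mem {φ : Formula P V A} : φ ∈ F → Deduces F φ
  | mp {φ ψ : Formula P V A} :
      Deduces F (Formula.imp φ ψ) → Deduces F φ → Deduces F ψ

def Consistent (F : Set (Formula P V A)) : Prop :=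
  ¬ ∃ φ : Formula P V A, Deduces F φ ∧ Deduces F (Formula.neg φ)

def MaximalConsistent (F : Set (Formula P V A)) : Prop :=
  Consistent F ∧ ∀ G : Set (Formula P V A), Consistent G → F ⊆ G → F = G

/-- A game. -/
structure Game (P V A : Type) : Type 1 where
  W : Type
  sim : V → W → W → Prop
  sim_equiv : ∀ x : V, Equivalence (sim x)
  trust : W → Set V
  Δ : Type
  delta_nonempty : Nonempty Δ
  M : W → (A → Δ) → W → Prop
  pi : P → Set W

/-- `w ∼_X u`. -/
def Game.simSet (G : Game P V A) (X : Set V) (w u : G.W) : Prop :=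
  ∀ x ∈ X, G.sim x w u

/-- The satisfaction relation `w ⊨ φ` (as `Sat G φ w`). -/
def Sat (G : Game P V A) : Formula P V A → G.W → Prop
  | Formula.atom p, w => w ∈ G.pi p
  | Formula.neg φ, w => ¬ Sat G φ w
  | Formula.imp φ ψ, w => Sat G φ w → Sat G ψ w
  | Formula.bel T X φ, w =>
      ∀ u : G.W, G.simSet X w u → T ⊆ G.trust u → Sat G φ u
  | Formula.str C T X φ, w =>
      ∃ s : {a : A // a ∈ C} → G.Δ,
        ∀ (u v : G.W) (δ : A → G.Δ),
          G.simSet X w u → T ⊆ G.trust u →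
          (∀ (a : A) (h : a ∈ C), s ⟨a, h⟩ = δ a) →
          G.M u δ v → T ⊆ G.trust v → Sat G φ v

/- ===================== Canonical game ===================== -/

/-- One block `X_i, b_i, T_i, F_i` of a canonical state. -/
structure Block (P V A B : Type) where
  X : Set V
  b : B
  T : Set V
  F : Set (Formula P V A)

variable {B : Type}

/-- `F(w)`: the last set of formulae of the sequence (or `F0` for the root). -/
def cF (F0 : Set (Formula P V A)) (l : List (Block P V A B)) : Set (Formula P V A) :=
  l.getLast?.elim F0 Block.F

/-- `𝒯_w = T(w)`: the last dataset of the sequence (or `T0` for the root). -/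
def cTrust (T0 : Set V) (l : List (Block P V A B)) : Set V :=
  l.getLast?.elim T0 Block.T

/-- Membership of a sequence in the set of canonical states `W`. -/
inductive IsState (T0 : Set V) (F0 : Set (Formula P V A)) :
    List (Block P V A B) → Prop
  | nil :
      (∀ (Y : Set V) (ψ : Formula P V A),
        Formula.imp (Formula.bel T0 Y ψ) ψ ∈ F0) →
      IsState T0 F0 []
  | snoc {l : List (Block P V A B)} {bl : Block P V A B} :
      IsState T0 F0 l →
      MaximalConsistent bl.F →
      (∀ φ : Formula P V A, Formula.bel ∅ bl.X φ ∈ cF F0 l → φ ∈ bl.F) →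
      (∀ (Y : Set V) (ψ : Formula P V A),
        Formula.imp (Formula.bel bl.T Y ψ) ψ ∈ bl.F) →
      IsState T0 F0 (l ++ [bl])

/-- The canonical states. -/
def CState (T0 : Set V) (F0 : Set (Formula P V A)) (B : Type) : Type :=
  {l : List (Block P V A B) // IsState T0 F0 l}

attribute [local instance] Classical.propDecidable

/-- Length of the longest common prefix of two sequences. -/
noncomputable def cpl {α : Type} : List α → List α → Nat
  | a :: as, b :: bs => if a = b then cpl as bs + 1 else 0
  | _, _ => 0

/-- The blocks labelling the edges on the unique simple path between two
nodes of the canonical tree. -/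
noncomputable def pathBlocks (w u : List (Block P V A B)) : List (Block P V A B) :=
  w.drop (cpl w u) ++ u.drop (cpl w u)

/-- `w ∼_x u` in the canonical game: every edge along the unique simple path
between `w` and `u` is labelled with `x`. -/
def csimVar (x : V) (w u : List (Block P V A B)) : Prop :=
  ∀ bl ∈ pathBlocks w u, x ∈ bl.X

/-- `w ∼_X u` in the canonical game. -/
def csim (X : Set V) (w u : List (Block P V A B)) : Prop :=
  ∀ x ∈ X, csimVar x w u

/-- The canonical mechanism `M`. -/
def Mech (T0 : Set V) (F0 : Set (Formula P V A))
    (w : CState T0 F0 B) (δ : A → Formula P V A × CState T0 F0 B)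
    (v : CState T0 F0 B) : Prop :=
  ∀ (C : Set A) (T X : Set V) (φ : Formula P V A),
    Formula.str C T X φ ∈ cF F0 w.1 →
    (∀ a ∈ C, (δ a).1 = φ) →
    (∀ a ∈ C, csim X w.1 (δ a).2.1) →
    T ⊆ cTrust T0 w.1 → T ⊆ cTrust T0 v.1 →
    φ ∈ cF F0 v.1

/-- Satisfaction `w ⊨ φ` on the canonical game (as `CSat T0 F0 φ w`). -/
def CSat (T0 : Set V) (F0 : Set (Formula P V A)) :
    Formula P V A → CState T0 F0 B → Prop
  | Formula.atom p, w => Formula.atom p ∈ cF F0 w.1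
  | Formula.neg φ, w => ¬ CSat T0 F0 φ w
  | Formula.imp φ ψ, w => CSat T0 F0 φ w → CSat T0 F0 ψ w
  | Formula.bel T X φ, w =>
      ∀ u : CState T0 F0 B, csim X w.1 u.1 → T ⊆ cTrust T0 u.1 → CSat T0 F0 φ u
  | Formula.str C T X φ, w =>
      ∃ s : {a : A // a ∈ C} → Formula P V A × CState T0 F0 B,
        ∀ (u v : CState T0 F0 B) (δ : A → Formula P V A × CState T0 F0 B),
          csim X w.1 u.1 → T ⊆ cTrust T0 u.1 →
          (∀ (a : A) (h : a ∈ C), s ⟨a, h⟩ = δ a) →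
          Mech T0 F0 u δ v → T ⊆ cTrust T0 v.1 → CSat T0 F0 φ v

/- ===================== Harmony ===================== -/

/-- Conjunction definable from ¬ and →. -/
def fand (φ ψ : Formula P V A) : Formula P V A :=
  Formula.neg (Formula.imp φ (Formula.neg ψ))

/-- A canonical tautology (verum). -/
noncomputable def verum (P V A : Type) [Nonempty (Formula P V A)] : Formula P V A :=
  Formula.imp (Classical.arbitrary (Formula P V A)) (Classical.arbitrary (Formula P V A))

/-- Conjunction of a finite list of formulae. -/
noncomputable def conjList [Nonempty (Formula P V A)] :
    List (Formula P V A) → Formula P V A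
  | [] => verum P V A
  | φ :: l => fand φ (conjList l)

/-- The pair `(F, G)` is in `T`-harmony: `F ⊬ [∅]^T_V ¬⋀G'` for each finite `G' ⊆ G`. -/
def THarmony [Nonempty (Formula P V A)] (T : Set V)
    (F G : Set (Formula P V A)) : Prop :=
  ∀ l : List (Formula P V A), (∀ ψ ∈ l, ψ ∈ G) →
    ¬ Deduces F (Formula.str ∅ T (Set.univ : Set V) (Formula.neg (conjList l)))

/-!
Each member of the coalition `C` plays the action `(φ, w)`. By strategic introspection
`[C]^T_X φ ∈ F(w)` gives `B^T_X [C]^T_X φ ∈ F(w)`. Negative introspection and truth make the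
relation `{φ | B^∅_X φ ∈ F} ⊆ G` between maximal consistent sets symmetric, so `F` and `G` contain
the same formulae `B^T_X ψ`; walking along the path from `w` to `w'` this yields
`B^T_X [C]^T_X φ ∈ F(w')`. As `T ⊆ 𝒯_{w'}`, beliefs in `F(w')` based on `T` are true there, hence
`[C]^T_X φ ∈ F(w')` and the mechanism applies at `w'`.
-/

open Formula

section Deduction

variable {F : Set (Formula P V A)} {φ ψ : Formula P V A}

namespace Thm

theorem imp_self (φ : Formula P V A) : Thm (imp φ φ) :=
  .taut fun _ _ himp => by simp only [himp, _root_.imp_self]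

theorem imp_imp_self (φ ψ : Formula P V A) : Thm (imp φ (imp ψ φ)) :=
  .taut fun _ _ himp => by simp only [himp]; tauto

theorem imp_imp_distrib (φ ψ χ : Formula P V A) :
    Thm (imp (imp φ (imp ψ χ)) (imp (imp φ ψ) (imp φ χ))) :=
  .taut fun _ _ himp => by simp only [himp]; tauto

theorem reductio (φ ψ : Formula P V A) : Thm (imp (imp φ ψ) (imp (imp φ (neg ψ)) (neg φ))) :=
  .taut fun _ hneg himp => by simp only [hneg, himp]; tauto

end Thm

theorem Deduces.imp_of_insert (h : Deduces (insert φ F) ψ) : Deduces F (imp φ ψ) := by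
  induction h with
  | thm hψ => exact .mp (.thm (.imp_imp_self _ φ)) (.thm hψ)
  | mem hψ =>
    rcases hψ with rfl | hψ
    · exact .thm (.imp_self _)
    · exact .mp (.thm (.imp_imp_self _ φ)) (.mem hψ)
  | mp _ _ ih_imp ih => exact .mp (.mp (.thm (.imp_imp_distrib φ _ _)) ih_imp) ih

theorem Consistent.insert_of_deduces (hF : Consistent F) (h : Deduces F φ) :
    Consistent (insert φ F) := by
  rintro ⟨χ, hχ, hnχ⟩
  exact hF ⟨χ, .mp hχ.imp_of_insert h, .mp hnχ.imp_of_insert h⟩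

theorem Deduces.neg_of_not_consistent_insert (h : ¬ Consistent (insert φ F)) :
    Deduces F (neg φ) := by
  obtain ⟨χ, hχ, hnχ⟩ := not_not.mp h
  exact .mp (.mp (.thm (.reductio φ χ)) hχ.imp_of_insert) hnχ.imp_of_insert

theorem Consistent.neg_notMem (hF : Consistent F) (h : φ ∈ F) : neg φ ∉ F :=
  fun hn => hF ⟨φ, .mem h, .mem hn⟩

namespace MaximalConsistent

theorem mem_of_consistent_insert (hF : MaximalConsistent F) (h : Consistent (insert φ F)) :
    φ ∈ F :=
  hF.2 _ h (Set.subset_insert φ F) ▸ Set.mem_insert φ F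

theorem mem_of_deduces (hF : MaximalConsistent F) (h : Deduces F φ) : φ ∈ F :=
  hF.mem_of_consistent_insert (hF.1.insert_of_deduces h)

theorem mem_of_imp_mem (hF : MaximalConsistent F) (himp : imp φ ψ ∈ F) (h : φ ∈ F) : ψ ∈ F :=
  hF.mem_of_deduces (.mp (.mem himp) (.mem h))

theorem mem_of_thm_imp (hF : MaximalConsistent F) (himp : Thm (imp φ ψ)) (h : φ ∈ F) : ψ ∈ F :=
  hF.mem_of_deduces (.mp (.thm himp) (.mem h))

theorem neg_mem_of_notMem (hF : MaximalConsistent F) (h : φ ∉ F) : neg φ ∈ F :=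
  hF.mem_of_deduces <| .neg_of_not_consistent_insert <| mt hF.mem_of_consistent_insert h

end MaximalConsistent

end Deduction

/-- The accessibility relation of the knowledge modality `B^∅_X` between sets of formulae: whatever
is known in `F` belongs to `G`. Successive blocks of a canonical state are related in this way. -/
def Accessible (X : Set V) (F G : Set (Formula P V A)) : Prop :=
  ∀ φ, bel ∅ X φ ∈ F → φ ∈ G

namespace Accessible

variable {T X Y : Set V} {F G : Set (Formula P V A)} {φ : Formula P V A}

theorem anti (hF : MaximalConsistent F) (hXY : X ⊆ Y) (h : Accessible Y F G) :
    Accessible X F G :=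
  fun φ hφ => h φ (hF.mem_of_thm_imp (.monoB subset_rfl hXY) hφ)

theorem bel_mem_left (hF : MaximalConsistent F) (hG : Consistent G) (h : Accessible X F G)
    (hφ : bel T X φ ∈ G) : bel T X φ ∈ F := by
  by_contra hn
  have known_neg : bel ∅ X (neg (bel T X φ)) ∈ F :=
    hF.mem_of_thm_imp .negIntro (hF.neg_mem_of_notMem hn)
  exact hG.neg_notMem hφ (h _ known_neg)

theorem symm (hF : MaximalConsistent F) (hG : Consistent G) (h : Accessible X F G) :
    Accessible X G F :=
  fun _ hφ => hF.mem_of_thm_imp .truth (h.bel_mem_left hF hG hφ)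

theorem bel_mem_iff (hF : MaximalConsistent F) (hG : MaximalConsistent G)
    (h : Accessible X F G) : bel T X φ ∈ F ↔ bel T X φ ∈ G :=
  ⟨(h.symm hF hG.1).bel_mem_left hG hF.1, h.bel_mem_left hF hG.1⟩

end Accessible

section Path

theorem cpl_comm {α : Type} (l m : List α) : cpl l m = cpl m l := by
  induction l generalizing m with
  | nil => cases m <;> rfl
  | cons a l ih =>
    cases m with
    | nil => rfl
    | cons b m => simp only [cpl, ih m, eq_comm]

theorem take_cpl {α : Type} (l m : List α) : l.take (cpl l m) = m.take (cpl l m) := by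
  induction l generalizing m with
  | nil => cases m <;> simp [cpl]
  | cons a l ih =>
    cases m with
    | nil => simp [cpl]
    | cons b m =>
      by_cases hab : a = b
      · simp [cpl, hab, ih m]
      · simp [cpl, hab]

variable {X : Set V} {w u : List (Block P V A B)}

theorem pathBlocks_perm (w u : List (Block P V A B)) :
    (pathBlocks w u).Perm (pathBlocks u w) := by
  rw [pathBlocks, pathBlocks, cpl_comm u w]
  exact List.perm_append_comm

theorem exists_pathBlocks_eq_append (w u : List (Block P V A B)) :
    ∃ p r s, w = p ++ r ∧ u = p ++ s ∧ pathBlocks w u = r ++ s :=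
  ⟨w.take (cpl w u), w.drop (cpl w u), u.drop (cpl w u), (List.take_append_drop _ w).symm,
    by rw [take_cpl, List.take_append_drop], rfl⟩

theorem csim_iff_forall_subset : csim X w u ↔ ∀ bl ∈ pathBlocks w u, X ⊆ bl.X :=
  ⟨fun h bl hbl x hx => h x hx bl hbl, fun h _ hx bl hbl => h bl hbl hx⟩

theorem csim.symm (h : csim X w u) : csim X u w :=
  fun x hx bl hbl => h x hx bl ((pathBlocks_perm u w).mem_iff.mp hbl)

end Path

section CanonicalState

theorem cF_append_singleton (F0 : Set (Formula P V A)) (l : List (Block P V A B))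
    (bl : Block P V A B) : cF F0 (l ++ [bl]) = bl.F := by
  simp [cF]

theorem cTrust_append_singleton (T0 : Set V) (l : List (Block P V A B)) (bl : Block P V A B) :
    cTrust T0 (l ++ [bl]) = bl.T := by
  simp [cTrust]

namespace IsState

variable {T0 T X : Set V} {F0 : Set (Formula P V A)} {l w u : List (Block P V A B)}
  {bl : Block P V A B} {C : Set A} {φ : Formula P V A}

theorem maximalConsistent (hF0 : MaximalConsistent F0) (h : IsState T0 F0 l) :
    MaximalConsistent (cF F0 l) := by
  cases h with
  | nil => exact hF0
  | snoc _ hbl => rwa [cF_append_singleton]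

theorem bel_cTrust_imp_mem (h : IsState T0 F0 l) (Y : Set V) (ψ : Formula P V A) :
    imp (bel (cTrust T0 l) Y ψ) ψ ∈ cF F0 l := by
  cases h with
  | nil htrust => exact htrust Y ψ
  | snoc _ _ _ htrust =>
    rw [cF_append_singleton, cTrust_append_singleton]
    exact htrust Y ψ

theorem mem_of_bel_mem (hF0 : MaximalConsistent F0) (h : IsState T0 F0 l)
    (hT : T ⊆ cTrust T0 l) (hφ : bel T X φ ∈ cF F0 l) : φ ∈ cF F0 l := by
  have hl := h.maximalConsistent hF0
  exact hl.mem_of_imp_mem (h.bel_cTrust_imp_mem X φ)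
    (hl.mem_of_thm_imp (.monoB hT subset_rfl) hφ)

theorem init_and_accessible (h : IsState T0 F0 (l ++ [bl])) :
    IsState T0 F0 l ∧ Accessible bl.X (cF F0 l) (cF F0 (l ++ [bl])) := by
  generalize hm : l ++ [bl] = m at h
  cases h with
  | nil => simp at hm
  | snoc hinit _ hacc =>
    obtain ⟨rfl, hbl⟩ := List.append_inj' hm rfl
    obtain rfl := List.singleton_inj.mp hbl
    exact ⟨hinit, by rwa [cF_append_singleton]⟩

theorem bel_mem_append_iff (hF0 : MaximalConsistent F0) {r : List (Block P V A B)}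
    (h : IsState T0 F0 (l ++ r)) (hX : ∀ bl ∈ r, X ⊆ bl.X) :
    bel T X φ ∈ cF F0 l ↔ bel T X φ ∈ cF F0 (l ++ r) := by
  induction r using List.reverseRecOn with
  | nil => rw [List.append_nil]
  | append_singleton r bl ih =>
    rw [← List.append_assoc] at h ⊢
    simp only [List.forall_mem_append, List.forall_mem_singleton] at hX
    obtain ⟨hinit, hacc⟩ := h.init_and_accessible
    have hmax := hinit.maximalConsistent hF0
    exact (ih hinit hX.1).trans
      ((hacc.anti hmax hX.2).bel_mem_iff hmax (h.maximalConsistent hF0))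

theorem bel_mem_iff_of_csim (hF0 : MaximalConsistent F0) (hw : IsState T0 F0 w)
    (hu : IsState T0 F0 u) (h : csim X w u) : bel T X φ ∈ cF F0 w ↔ bel T X φ ∈ cF F0 u := by
  rw [csim_iff_forall_subset] at h
  obtain ⟨p, r, s, rfl, rfl, hpath⟩ := exists_pathBlocks_eq_append w u
  rw [hpath, List.forall_mem_append] at h
  exact (hw.bel_mem_append_iff hF0 h.1).symm.trans (hu.bel_mem_append_iff hF0 h.2)

theorem str_mem_of_csim (hF0 : MaximalConsistent F0) (hw : IsState T0 F0 w)
    (hu : IsState T0 F0 u) (h : csim X w u) (hT : T ⊆ cTrust T0 u)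
    (hφ : str C T X φ ∈ cF F0 w) : str C T X φ ∈ cF F0 u := by
  have believed : bel T X (str C T X φ) ∈ cF F0 w :=
    (hw.maximalConsistent hF0).mem_of_thm_imp .strIntro₁ hφ
  exact hu.mem_of_bel_mem hF0 hT ((hw.bel_mem_iff_of_csim hF0 hu h).mp believed)

end IsState

end CanonicalState

theorem strategy_child_all_general {T0 : Set V} {F0 : Set (Formula P V A)}
    (hF0 : MaximalConsistent F0) (w : CState T0 F0 B) {C : Set A} {T X : Set V}
    {φ : Formula P V A} (h : str C T X φ ∈ cF F0 w.1) :
    ∃ s : {a : A // a ∈ C} → Formula P V A × CState T0 F0 B,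
      ∀ (w' v : CState T0 F0 B) (δ : A → Formula P V A × CState T0 F0 B),
        csim X w.1 w'.1 →
        (∀ (a : A) (ha : a ∈ C), s ⟨a, ha⟩ = δ a) →
        T ⊆ cTrust T0 w'.1 → T ⊆ cTrust T0 v.1 →
        Mech T0 F0 w' δ v →
        φ ∈ cF F0 v.1 := by
  refine ⟨fun _ => (φ, w), fun w' v δ hsim hs hTw' hTv hM => ?_⟩
  have hstr : str C T X φ ∈ cF F0 w'.1 := w.2.str_mem_of_csim hF0 w'.2 hsim hTw' h
  refine hM C T X φ hstr (fun a ha => ?_) (fun a ha => ?_) hTw' hTv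
  · rw [← hs a ha]
  · rw [← hs a ha]
    exact hsim.symm

/-- for any canonical state w and any [C]^T_X φ ∈ F(w), there is an action
profile s ∈ Δ^C such that for all canonical states w', v and each complete action profile δ,
if w ∼_X w', s =_C δ, T ⊆ 𝒯_{w'}, T ⊆ 𝒯_v, and (w', δ, v) ∈ M, then φ ∈ F(v). -/
theorem strategy_child_all {P V A B : Type}
    (T0 : Set V) (F0 : Set (Formula P V A))
    (hF0 : MaximalConsistent F0) (hB : Cardinal.mk A < Cardinal.mk B)
    (w : CState T0 F0 B) (C : Set A) (T X : Set V) (φ : Formula P V A)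
    (h : Formula.str C T X φ ∈ cF F0 w.1) :
    ∃ s : {a : A // a ∈ C} → Formula P V A × CState T0 F0 B,
      ∀ (w' v : CState T0 F0 B) (δ : A → Formula P V A × CState T0 F0 B),
        csim X w.1 w'.1 →
        (∀ (a : A) (ha : a ∈ C), s ⟨a, ha⟩ = δ a) →
        T ⊆ cTrust T0 w'.1 → T ⊆ cTrust T0 v.1 →
        Mech T0 F0 w' δ v →
        φ ∈ cF F0 v.1 := by
  exact strategy_child_all_general hF0 w h
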